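/- The ℂ-vector space of homogeneous degree-5 polynomials p ∈ ℂ[z₀,…,z₄] with p ∘ g₁ = p and p ∘ g₂ = p is exactly the span of the six polynomials θ₁, θ₂, θ₃, η₂, η₃, η₄, and these six polynomials are linearly independent; in particular this invariant space has dimension 6. -/

import Mathlib

open MvPolynomial

/-- `ω = exp(2πi/5)`, a primitive fifth root of unity. -/
noncomputable def ω : ℂ := Complex.exp (2 * Real.pi * Complex.I / 5)

/-- Substitution `p ↦ p ∘ g₁` where `g₁(z₀,z₁,z₂,z₃,z₄) = (z₄,z₀,z₁,z₂,z₃)`. -/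
noncomputable def compG1 : MvPolynomial (Fin 5) ℂ →ₐ[ℂ] MvPolynomial (Fin 5) ℂ :=
  aeval fun i : Fin 5 => X (i - 1)

/-- Substitution `p ↦ p ∘ g₂` where `g₂(z₀,…,z₄) = (z₀, ω z₁, ω² z₂, ω³ z₃, ω⁴ z₄)`. -/
noncomputable def compG2 : MvPolynomial (Fin 5) ℂ →ₐ[ℂ] MvPolynomial (Fin 5) ℂ :=
  aeval fun i : Fin 5 => C (ω ^ (i : ℕ)) * X i

/-- `θ₁ = z₀⁵+z₁⁵+z₂⁵+z₃⁵+z₄⁵` -/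
noncomputable def θ1 : MvPolynomial (Fin 5) ℂ :=
  X 0 ^ 5 + X 1 ^ 5 + X 2 ^ 5 + X 3 ^ 5 + X 4 ^ 5

/-- `θ₂ = z₀z₁z₂z₃z₄` -/
noncomputable def θ2 : MvPolynomial (Fin 5) ℂ := X 0 * X 1 * X 2 * X 3 * X 4

/-- `θ₃ = z₀³z₁z₄ + z₀z₁³z₂ + z₀z₃z₄³ + z₁z₂³z₃ + z₂z₃³z₄` -/
noncomputable def θ3 : MvPolynomial (Fin 5) ℂ :=
  X 0 ^ 3 * X 1 * X 4 + X 0 * X 1 ^ 3 * X 2 + X 0 * X 3 * X 4 ^ 3 +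
    X 1 * X 2 ^ 3 * X 3 + X 2 * X 3 ^ 3 * X 4

/-- `η₂ = z₀²z₁z₂² + z₁²z₂z₃² + z₂²z₃z₄² + z₃²z₄z₀² + z₄²z₀z₁²` -/
noncomputable def η2 : MvPolynomial (Fin 5) ℂ :=
  X 0 ^ 2 * X 1 * X 2 ^ 2 + X 1 ^ 2 * X 2 * X 3 ^ 2 + X 2 ^ 2 * X 3 * X 4 ^ 2 +
    X 3 ^ 2 * X 4 * X 0 ^ 2 + X 4 ^ 2 * X 0 * X 1 ^ 2

/-- `η₃ = z₀²z₁²z₃ + z₁²z₂²z₄ + z₂²z₃²z₀ + z₃²z₄²z₁ + z₄²z₀²z₂` -/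
noncomputable def η3 : MvPolynomial (Fin 5) ℂ :=
  X 0 ^ 2 * X 1 ^ 2 * X 3 + X 1 ^ 2 * X 2 ^ 2 * X 4 + X 2 ^ 2 * X 3 ^ 2 * X 0 +
    X 3 ^ 2 * X 4 ^ 2 * X 1 + X 4 ^ 2 * X 0 ^ 2 * X 2

/-- `η₄ = z₀³z₂z₃ + z₁³z₃z₄ + z₂³z₄z₀ + z₃³z₀z₁ + z₄³z₁z₂` -/
noncomputable def η4 : MvPolynomial (Fin 5) ℂ :=
  X 0 ^ 3 * X 2 * X 3 + X 1 ^ 3 * X 3 * X 4 + X 2 ^ 3 * X 4 * X 0 +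
    X 3 ^ 3 * X 0 * X 1 + X 4 ^ 3 * X 1 * X 2


noncomputable abbrev spanS : Submodule ℂ (MvPolynomial (Fin 5) ℂ) :=
  Submodule.span ℂ ({θ1, θ2, θ3, η2, η3, η4} : Set (MvPolynomial (Fin 5) ℂ))

lemma omega_prim : IsPrimitiveRoot ω 5 := by
  have := Complex.isPrimitiveRoot_exp 5 (by norm_num)
  simpa [ω] using this

def wt (m : Fin 5 →₀ ℕ) : ℕ := m 1 + 2 * m 2 + 3 * m 3 + 4 * m 4

lemma monomial_five (m : Fin 5 →₀ ℕ) (c : ℂ) : monomial m c =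
    C c * (X 0 ^ m 0 * X 1 ^ m 1 * X 2 ^ m 2 * X 3 ^ m 3 * X 4 ^ m 4) := by
  rw [monomial_eq, Finsupp.prod_fintype _ _ (by simp), Fin.prod_univ_five]

lemma compG2_monomial (m : Fin 5 →₀ ℕ) (c : ℂ) :
    compG2 (monomial m c) = C (ω ^ wt m) * monomial m c := by
  rw [monomial_five]
  simp only [compG2, map_mul, map_pow, aeval_X, wt, algHom_C, algebraMap_eq]
  simp
  ring

lemma coeff_compG2 (p : MvPolynomial (Fin 5) ℂ) (m : Fin 5 →₀ ℕ) :
    coeff m (compG2 p) = ω ^ wt m * coeff m p := by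
  induction p using MvPolynomial.induction_on' with
  | monomial u a =>
    rw [compG2_monomial, coeff_C_mul, coeff_monomial]
    split_ifs with h
    · rw [h]
    · simp
  | add p q hp hq => rw [map_add, coeff_add, hp, hq, coeff_add]; ring

lemma wt_dvd {p : MvPolynomial (Fin 5) ℂ} (h : compG2 p = p) {m : Fin 5 →₀ ℕ}
    (hm : coeff m p ≠ 0) : 5 ∣ wt m := by
  have h1 := coeff_compG2 p m
  rw [h] at h1
  have h2 : ω ^ wt m = 1 := by
    apply mul_right_cancel₀ hm
    rw [← h1, one_mul]
  exact (omega_prim.pow_eq_one_iff_dvd _).1 h2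

noncomputable def reyn : MvPolynomial (Fin 5) ℂ →ₗ[ℂ] MvPolynomial (Fin 5) ℂ :=
  let L := compG1.toLinearMap
  LinearMap.id + L + L ∘ₗ L + L ∘ₗ L ∘ₗ L + L ∘ₗ L ∘ₗ L ∘ₗ L

lemma reyn_apply (p : MvPolynomial (Fin 5) ℂ) : reyn p = p + compG1 p + compG1 (compG1 p)
    + compG1 (compG1 (compG1 p)) + compG1 (compG1 (compG1 (compG1 p))) := rfl

lemma compG1_X0 : compG1 (X 0) = X 4 := by simp [compG1]; rfl
lemma compG1_X1 : compG1 (X 1) = X 0 := by simp [compG1]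
lemma compG1_X2 : compG1 (X 2) = X 1 := by simp [compG1]
lemma compG1_X3 : compG1 (X 3) = X 2 := by simp [compG1]
lemma compG1_X4 : compG1 (X 4) = X 3 := by simp [compG1]

def lst26 : List (ℕ × ℕ × ℕ × ℕ × ℕ) := [(5, 0, 0, 0, 0), (0, 0, 0, 0, 5), (0, 0, 0, 5, 0), (0, 0, 5, 0, 0), (0, 5, 0, 0, 0),
    (1, 1, 1, 1, 1),
    (3, 1, 0, 0, 1), (1, 0, 0, 1, 3), (0, 0, 1, 3, 1), (0, 1, 3, 1, 0), (1, 3, 1, 0, 0),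
    (2, 1, 2, 0, 0), (1, 2, 0, 0, 2), (2, 0, 0, 2, 1), (0, 0, 2, 1, 2), (0, 2, 1, 2, 0),
    (2, 2, 0, 1, 0), (2, 0, 1, 0, 2), (0, 1, 0, 2, 2), (1, 0, 2, 2, 0), (0, 2, 2, 0, 1),
    (3, 0, 1, 1, 0), (0, 1, 1, 0, 3), (1, 1, 0, 3, 0), (1, 0, 3, 0, 1), (0, 3, 0, 1, 1)]

lemma cases26 : ∀ a : Fin 6, ∀ b : Fin 6, ∀ c : Fin 6, ∀ d : Fin 6,
    a.1 + b.1 + c.1 + d.1 ≤ 5 →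
    5 ∣ b.1 + 2 * c.1 + 3 * d.1 + 4 * (5 - a.1 - b.1 - c.1 - d.1) →
    (a.1, b.1, c.1, d.1, 5 - a.1 - b.1 - c.1 - d.1) ∈ lst26 := by
  decide +kernel

lemma mem_spanS : θ1 ∈ spanS ∧ θ2 ∈ spanS ∧ θ3 ∈ spanS ∧ η2 ∈ spanS ∧ η3 ∈ spanS ∧
    η4 ∈ spanS := by
  refine ⟨?_, ?_, ?_, ?_, ?_, ?_⟩ <;> exact Submodule.subset_span (by simp)

lemma R_mon (a b c d e : ℕ) (hs : a + b + c + d + e = 5) (hw : 5 ∣ b + 2 * c + 3 * d + 4 * e) :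
    reyn (X 0 ^ a * X 1 ^ b * X 2 ^ c * X 3 ^ d * X 4 ^ e) ∈ spanS := by
  have he : e = 5 - a - b - c - d := by omega
  have h := cases26 ⟨a, by omega⟩ ⟨b, by omega⟩ ⟨c, by omega⟩ ⟨d, by omega⟩
    (by simp only; omega) (by simp only; rw [← he]; exact hw)
  simp only at h
  rw [← he] at h
  clear he hs hw
  obtain ⟨h1, h2, h3, h4, h5, h6⟩ := mem_spanS
  simp only [lst26, List.mem_cons, Prod.mk.injEq, List.not_mem_nil, or_false] at h
  rw [reyn_apply]
  simp only [map_mul, map_pow, compG1_X0, compG1_X1, compG1_X2, compG1_X3, compG1_X4]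
  rcases h with ⟨rfl, rfl, rfl, rfl, rfl⟩ | ⟨rfl, rfl, rfl, rfl, rfl⟩ | ⟨rfl, rfl, rfl, rfl, rfl⟩ | ⟨rfl, rfl, rfl, rfl, rfl⟩ | ⟨rfl, rfl, rfl, rfl, rfl⟩ | ⟨rfl, rfl, rfl, rfl, rfl⟩ | ⟨rfl, rfl, rfl, rfl, rfl⟩ | ⟨rfl, rfl, rfl, rfl, rfl⟩ | ⟨rfl, rfl, rfl, rfl, rfl⟩ | ⟨rfl, rfl, rfl, rfl, rfl⟩ | ⟨rfl, rfl, rfl, rfl, rfl⟩ | ⟨rfl, rfl, rfl, rfl, rfl⟩ | ⟨rfl, rfl, rfl, rfl, rfl⟩ | ⟨rfl, rfl, rfl, rfl, rfl⟩ | ⟨rfl, rfl, rfl, rfl, rfl⟩ | ⟨rfl, rfl, rfl, rfl, rfl⟩ | ⟨rfl, rfl, rfl, rfl, rfl⟩ | ⟨rfl, rfl, rfl, rfl, rfl⟩ | ⟨rfl, rfl, rfl, rfl, rfl⟩ | ⟨rfl, rfl, rfl, rfl, rfl⟩ | ⟨rfl, rfl, rfl, rfl, rfl⟩ | ⟨rfl,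 rfl, rfl, rfl, rfl⟩ | ⟨rfl, rfl, rfl, rfl, rfl⟩ | ⟨rfl, rfl, rfl, rfl, rfl⟩ | ⟨rfl, rfl, rfl, rfl, rfl⟩ | ⟨rfl, rfl, rfl, rfl, rfl⟩
  all_goals first
    | (convert h1 using 1; rw [θ1]; ring1)
    | (convert Submodule.smul_mem _ (5 : ℂ) h2 using 1; rw [θ2, smul_eq_C_mul, map_ofNat]; ring1)
    | (convert h3 using 1; rw [θ3]; ring1)
    | (convert h4 using 1; rw [η2]; ring1)
    | (convert h5 using 1; rw [η3]; ring1)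
    | (convert h6 using 1; rw [η4]; ring1)

lemma R_mem {p : MvPolynomial (Fin 5) ℂ} (hp : p ∈ homogeneousSubmodule (Fin 5) ℂ 5)
    (h : compG2 p = p) : reyn p ∈ spanS := by
  rw [p.as_sum, map_sum]
  refine Submodule.sum_mem _ fun m hm => ?_
  have hc : coeff m p ≠ 0 := by simpa using hm
  rw [monomial_five, ← smul_eq_C_mul, map_smul]
  refine Submodule.smul_mem _ _ (R_mon _ _ _ _ _ ?_ ?_)
  · have h1 := (mem_homogeneousSubmodule 5 p).1 hp hc
    rw [Finsupp.weight_apply, Finsupp.sum_fintype _ _ (by simp), Fin.sum_univ_five] at h1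
    simpa using h1
  · exact wt_dvd h hc

lemma inv_mem {p : MvPolynomial (Fin 5) ℂ} (hp : p ∈ homogeneousSubmodule (Fin 5) ℂ 5)
    (h1 : compG1 p = p) (h : compG2 p = p) : p ∈ spanS := by
  have := R_mem hp h
  simp only [reyn_apply, h1] at this
  have h2 : p = (1 / 5 : ℂ) • (p + p + p + p + p) := by module
  rw [h2]
  exact Submodule.smul_mem _ _ this

lemma mon_G2 (a b c d e : ℕ) (hw : 5 ∣ b + 2 * c + 3 * d + 4 * e) :
    compG2 (X 0 ^ a * X 1 ^ b * X 2 ^ c * X 3 ^ d * X 4 ^ e) =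
      X 0 ^ a * X 1 ^ b * X 2 ^ c * X 3 ^ d * X 4 ^ e := by
  have h : (ω ^ (b + 2 * c + 3 * d + 4 * e)) = 1 := (omega_prim.pow_eq_one_iff_dvd _).2 hw
  have h' : (C (ω ^ (b + 2 * c + 3 * d + 4 * e)) : MvPolynomial (Fin 5) ℂ) = 1 := by rw [h, C_1]
  simp only [compG2, map_mul, map_pow, aeval_X]
  simp only [map_pow] at h'
  trans (C ω ^ (b + 2 * c + 3 * d + 4 * e)) * (X 0 ^ a * X 1 ^ b * X 2 ^ c * X 3 ^ d * X 4 ^ e)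
  · simp
    ring
  · rw [h', one_mul]

lemma mon_hom (a b c d e : ℕ) (hs : a + b + c + d + e = 5) :
    (X 0 ^ a * X 1 ^ b * X 2 ^ c * X 3 ^ d * X 4 ^ e : MvPolynomial (Fin 5) ℂ).IsHomogeneous 5 := by
  have := ((((isHomogeneous_X_pow (R := ℂ) (0 : Fin 5) a).mul (isHomogeneous_X_pow 1 b)).mul
    (isHomogeneous_X_pow 2 c)).mul (isHomogeneous_X_pow 3 d)).mul (isHomogeneous_X_pow 4 e)
  rwa [hs] at this

lemma g1_inv : compG1 θ1 = θ1 ∧ compG1 θ2 = θ2 ∧ compG1 θ3 = θ3 ∧ compG1 η2 = η2 ∧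
    compG1 η3 = η3 ∧ compG1 η4 = η4 := by
  simp only [θ1, θ2, θ3, η2, η3, η4, map_add, map_mul, map_pow,
    compG1_X0, compG1_X1, compG1_X2, compG1_X3, compG1_X4]
  refine ⟨?_, ?_, ?_, ?_, ?_, ?_⟩ <;> ring

/-- homogeneous of degree 5 and fixed by the diagonal map -/
noncomputable def homS : Submodule ℂ (MvPolynomial (Fin 5) ℂ) :=
  homogeneousSubmodule (Fin 5) ℂ 5 ⊓ LinearMap.eqLocus compG2.toLinearMap LinearMap.id

lemma mon_homS (a b c d e : ℕ) (hs : a + b + c + d + e = 5)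
    (hw : 5 ∣ b + 2 * c + 3 * d + 4 * e) :
    X 0 ^ a * X 1 ^ b * X 2 ^ c * X 3 ^ d * X 4 ^ e ∈ homS :=
  ⟨(mem_homogeneousSubmodule _ _).2 (mon_hom a b c d e hs), mon_G2 a b c d e hw⟩

lemma homS_θ1 : θ1 ∈ homS := by
  convert (add_mem (add_mem (add_mem (add_mem (mon_homS 5 0 0 0 0 rfl (by norm_num))
    (mon_homS 0 0 0 0 5 rfl (by norm_num)))
    (mon_homS 0 0 0 5 0 rfl (by norm_num)))
    (mon_homS 0 0 5 0 0 rfl (by norm_num)))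
    (mon_homS 0 5 0 0 0 rfl (by norm_num))) using 1
  rw [θ1]; ring

lemma homS_θ2 : θ2 ∈ homS := by
  convert (mon_homS 1 1 1 1 1 rfl (by norm_num)) using 1
  rw [θ2]; ring

lemma homS_θ3 : θ3 ∈ homS := by
  convert (add_mem (add_mem (add_mem (add_mem (mon_homS 3 1 0 0 1 rfl (by norm_num))
    (mon_homS 1 0 0 1 3 rfl (by norm_num)))
    (mon_homS 0 0 1 3 1 rfl (by norm_num)))
    (mon_homS 0 1 3 1 0 rfl (by norm_num)))
    (mon_homS 1 3 1 0 0 rfl (by norm_num))) using 1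
  rw [θ3]; ring

lemma homS_η2 : η2 ∈ homS := by
  convert (add_mem (add_mem (add_mem (add_mem (mon_homS 2 1 2 0 0 rfl (by norm_num))
    (mon_homS 1 2 0 0 2 rfl (by norm_num)))
    (mon_homS 2 0 0 2 1 rfl (by norm_num)))
    (mon_homS 0 0 2 1 2 rfl (by norm_num)))
    (mon_homS 0 2 1 2 0 rfl (by norm_num))) using 1
  rw [η2]; ring

lemma homS_η3 : η3 ∈ homS := by
  convert (add_mem (add_mem (add_mem (add_mem (mon_homS 2 2 0 1 0 rfl (by norm_num))
    (mon_homS 2 0 1 0 2 rfl (by norm_num)))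
    (mon_homS 0 1 0 2 2 rfl (by norm_num)))
    (mon_homS 1 0 2 2 0 rfl (by norm_num)))
    (mon_homS 0 2 2 0 1 rfl (by norm_num))) using 1
  rw [η3]; ring

lemma homS_η4 : η4 ∈ homS := by
  convert (add_mem (add_mem (add_mem (add_mem (mon_homS 3 0 1 1 0 rfl (by norm_num))
    (mon_homS 0 1 1 0 3 rfl (by norm_num)))
    (mon_homS 1 1 0 3 0 rfl (by norm_num)))
    (mon_homS 1 0 3 0 1 rfl (by norm_num)))
    (mon_homS 0 3 0 1 1 rfl (by norm_num))) using 1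
  rw [η4]; ring

lemma span_le {p : MvPolynomial (Fin 5) ℂ} (hp : p ∈ spanS) :
    p ∈ homogeneousSubmodule (Fin 5) ℂ 5 ∧ compG1 p = p ∧ compG2 p = p := by
  have h : spanS ≤ homS ⊓ LinearMap.eqLocus compG1.toLinearMap LinearMap.id := by
    obtain ⟨h1, h2, h3, h4, h5, h6⟩ := g1_inv
    refine Submodule.span_le.2 ?_
    rintro q (rfl | rfl | rfl | rfl | rfl | rfl)
    exacts [⟨homS_θ1, h1⟩, ⟨homS_θ2, h2⟩, ⟨homS_θ3, h3⟩, ⟨homS_η2, h4⟩, ⟨homS_η3, h5⟩,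
      ⟨homS_η4, h6⟩]
  obtain ⟨⟨h1, h2⟩, h3⟩ := h hp
  exact ⟨h1, h3, h2⟩

lemma lin_ind : LinearIndependent ℂ ![θ1, θ2, θ3, η2, η3, η4] := by
  rw [Fintype.linearIndependent_iff]
  intro g hg
  simp only [Fin.sum_univ_six] at hg
  have key (v : Fin 5 → ℂ) := congrArg (eval v) hg
  have k1 := key ![1, 0, 0, 0, 0]
  have k2 := key ![1, 1, 0, 0, 1]
  have k3 := key ![2, 1, 0, 0, 1]
  have k4 := key ![1, 0, 1, 1, 0]
  have k5 := key ![2, 0, 1, 1, 0]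
  have k6 := key ![1, 1, 1, 1, 1]
  simp [θ1, θ2, θ3, η2, η3, η4, smul_eval] at k1 k2 k3 k4 k5 k6
  clear key hg
  have e2 : g 2 = 0 := by linear_combination (k3 - 2 * k2 - 28 * k1) / 6
  have e3 : g 3 = 0 := by linear_combination k2 - e2 - 3 * k1
  have e5 : g 5 = 0 := by linear_combination (k5 - 2 * k4 - 28 * k1) / 6
  have e4 : g 4 = 0 := by linear_combination k4 - e5 - 3 * k1
  have e1 : g 1 = 0 := by linear_combination k6 - 5 * (k1 + e2 + e3 + e4 + e5)
  intro i
  fin_cases i <;> assumption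

/-- The space of invariant homogeneous quintic polynomials is exactly the span of
`θ₁, θ₂, θ₃, η₂, η₃, η₄`; these six are linearly independent, so it has dimension 6. -/
theorem stmt_5 :
    {p : MvPolynomial (Fin 5) ℂ |
        p ∈ homogeneousSubmodule (Fin 5) ℂ 5 ∧ compG1 p = p ∧ compG2 p = p} =
      ↑(Submodule.span ℂ ({θ1, θ2, θ3, η2, η3, η4} : Set (MvPolynomial (Fin 5) ℂ))) ∧
    LinearIndependent ℂ ![θ1, θ2, θ3, η2, η3, η4] ∧
    Module.finrank ℂ
      ↥(Submodule.span ℂ ({θ1, θ2, θ3, η2, η3, η4} : Set (MvPolynomial (Fin 5) ℂ))) = 6 := by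
  refine ⟨?_, lin_ind, ?_⟩
  · ext p
    exact ⟨fun h => inv_mem h.1 h.2.1 h.2.2, fun h => span_le h⟩
  · have h := finrank_span_eq_card lin_ind
    have hr : Set.range ![θ1, θ2, θ3, η2, η3, η4] = {θ1, θ2, θ3, η2, η3, η4} := by
      simp only [Matrix.range_cons, Matrix.range_empty, Set.union_empty, Set.singleton_union]
    rw [hr] at h
    simpa using h
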